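/- Let X and Y be metric spaces and let f : X → Y be a surjective map that is coarse and coarsely n-to-1 (n ≥ 1). Then X is large scale finitistic if and only if Y is large scale finitistic. -/

import Mathlib

open Metric Set

/-- A set `U` is uniformly bounded by `D`: all pairwise distances are at most `D`. -/
def UBdd {X : Type*} [MetricSpace X] (D : ℝ) (U : Set X) : Prop :=
  ∀ x ∈ U, ∀ y ∈ U, dist x y ≤ D

/-- A family of subsets covers `X`. -/
def IsCover {X : Type*} (𝒱 : Set (Set X)) : Prop := ∀ x : X, ∃ U ∈ 𝒱, x ∈ U

/-- The cover `𝒱` has Lebesgue number at least `R`: every open `R`-ball is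
contained in some member of `𝒱`. -/
def LebAtLeast {X : Type*} [MetricSpace X] (R : ℝ) (𝒱 : Set (Set X)) : Prop :=
  ∀ x : X, ∃ U ∈ 𝒱, Metric.ball x R ⊆ U

/-- The family `𝒱` has multiplicity at most `m`: every point belongs to at most
`m` members of `𝒱`. -/
def MultAtMost {X : Type*} (m : ℕ) (𝒱 : Set (Set X)) : Prop :=
  ∀ x : X, {U ∈ 𝒱 | x ∈ U}.Finite ∧ {U ∈ 𝒱 | x ∈ U}.ncard ≤ m

/-- The family `𝒱` is `R`-disjoint: points of distinct members are at distance at least `R`. -/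
def RDisjoint {X : Type*} [MetricSpace X] (R : ℝ) (𝒱 : Set (Set X)) : Prop :=
  ∀ A ∈ 𝒱, ∀ B ∈ 𝒱, A ≠ B → ∀ a ∈ A, ∀ b ∈ B, R ≤ dist a b

/-- A map is coarse (bornologous). -/
def Coarse {X Y : Type*} [MetricSpace X] [MetricSpace Y] (f : X → Y) : Prop :=
  ∀ R > (0:ℝ), ∃ S > (0:ℝ), ∀ x x' : X, dist x x' ≤ R → dist (f x) (f x') ≤ S

/-- A map is coarsely `n`-to-`1`: preimages of sets of diameter at most `R` can be covered
by at most `n` sets of diameter at most `S`, where `S` depends only on `R`. -/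
def CoarselyNTo1 {X Y : Type*} [MetricSpace X] [MetricSpace Y] (n : ℕ) (f : X → Y) : Prop :=
  ∀ R > (0:ℝ), ∃ S > (0:ℝ), ∀ A : Set Y, UBdd R A →
    ∃ B : Fin n → Set X, f ⁻¹' A ⊆ ⋃ i, B i ∧ ∀ i, UBdd S (B i)

/-- The star of a set `B` with respect to a family `𝒰`: the union of all members of `𝒰`
meeting `B`. -/
def StarOf {X : Type*} (B : Set X) (𝒰 : Set (Set X)) : Set X :=
  ⋃₀ {U ∈ 𝒰 | (U ∩ B).Nonempty}

/-!
Both implications carry a cover across `f` and bound the multiplicity of the new cover at a point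
by that of the old cover at `n` points.

From `X` to `Y`: replace `U` by a neighbourhood of `f(core of U)`, where the `r`-core of `U`
consists of the points whose `r`-ball lies in `U`. If `y` lies in this set, then the core of `U`
meets `f⁻¹(ball around y)`. The latter is covered by the `r`-balls about `n` points, which depend on
`y` alone, and `U` must contain one of these points. As the image of `f` is coarsely dense, a wide
enough neighbourhood gives the prescribed Lebesgue number.

From `Y` to `X`: split each `f⁻¹(A)` into `n` bounded pieces and thicken every piece inside
`f⁻¹(A)`. Thickening restores the Lebesgue number, and staying inside `f⁻¹(A)` means that a member
through `x` comes from one of the `n` pieces over some `A` containing `f x`.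
-/

/-- A metric space is large scale finitistic if at every scale `R` it has a uniformly bounded cover
of finite multiplicity and Lebesgue number at least `R`. -/
def LargeScaleFinitistic (X : Type*) [MetricSpace X] : Prop :=
  ∀ R > (0 : ℝ), ∃ m : ℕ, 1 ≤ m ∧ ∃ 𝒱 : Set (Set X), ∃ D > (0 : ℝ), IsCover 𝒱 ∧
    (∀ U ∈ 𝒱, UBdd D U) ∧ LebAtLeast R 𝒱 ∧ MultAtMost m 𝒱

/-- A map is coarsely surjective if every point of the codomain is within a fixed distance of the
image. -/
def CoarselySurjective {X Y : Type*} [MetricSpace Y] (f : X → Y) : Prop :=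
  ∃ C > (0 : ℝ), ∀ y, ∃ x, dist y (f x) ≤ C

/-- The transfer of a member `U` of a cover of `X` to `Y`: the `R`-neighbourhood of the image of the
`r`-core of `U`, that is, of the points whose `r`-ball lies in `U`. -/
def coreImage {X Y : Type*} [MetricSpace X] [MetricSpace Y] (f : X → Y) (r R : ℝ) (U : Set X) :
    Set Y :=
  thickening R (f '' {x | ball x r ⊆ U})

/-- The transfer of a member `A` of a cover of `Y` to `X`: the `R`-neighbourhood, inside `f ⁻¹' A`,
of the piece `B A i` of `f ⁻¹' A`. -/
def preimagePiece {X Y ι : Type*} [MetricSpace X] (f : X → Y) (R : ℝ) (B : Set Y → ι → Set X)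
    (i : ι) (A : Set Y) : Set X :=
  f ⁻¹' A ∩ thickening R (B A i)

section

variable {X Y ι : Type*} {m : ℕ} {D R r : ℝ} {𝒱 : Set (Set X)} {𝒲 : Set (Set Y)}

theorem MultAtMost.mono {k : ℕ} (h : MultAtMost m 𝒱) (hmk : m ≤ k) : MultAtMost k 𝒱 :=
  fun x => ⟨(h x).1, (h x).2.trans hmk⟩

theorem MultAtMost.of_forall_exists_points [Fintype ι] (h𝒱 : MultAtMost m 𝒱)
    (g : ι → Set X → Set Y)
    (h : ∀ y, ∃ p : ι → X, ∀ W ∈ 𝒲, y ∈ W → ∃ i, ∃ U ∈ 𝒱, p i ∈ U ∧ g i U = W) :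
    MultAtMost (Fintype.card ι * m) 𝒲 := by
  intro y
  obtain ⟨p, hp⟩ := h y
  let 𝒯 : ι → Set (Set Y) := fun i => g i '' {U ∈ 𝒱 | p i ∈ U}
  have h_sub : {W ∈ 𝒲 | y ∈ W} ⊆ ⋃ i, 𝒯 i := by
    rintro W ⟨hW, hyW⟩
    obtain ⟨i, U, hU, hpU, rfl⟩ := hp W hW hyW
    exact mem_iUnion.2 ⟨i, U, ⟨hU, hpU⟩, rfl⟩
  have h_fin : (⋃ i, 𝒯 i).Finite := finite_iUnion fun i => (h𝒱 (p i)).1.image (g i)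
  have h_card (i : ι) : (𝒯 i).ncard ≤ m := (ncard_image_le (h𝒱 (p i)).1).trans (h𝒱 (p i)).2
  refine ⟨h_fin.subset h_sub, ?_⟩
  calc {W ∈ 𝒲 | y ∈ W}.ncard ≤ (⋃ i, 𝒯 i).ncard := ncard_le_ncard h_sub h_fin
    _ ≤ ∑ i, (𝒯 i).ncard := ncard_iUnion_le_of_fintype 𝒯
    _ ≤ Fintype.card ι * m := Finset.sum_le_card_nsmul _ _ _ fun i _ => h_card i

theorem CoarselySurjective.of_surjective [MetricSpace Y] {f : X → Y} (hf : Function.Surjective f) :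
    CoarselySurjective f := by
  refine ⟨1, one_pos, fun y => ?_⟩
  obtain ⟨x, rfl⟩ := hf y
  exact ⟨x, (dist_self (f x)).trans_le zero_le_one⟩

variable [MetricSpace X]

theorem UBdd.subset {U V : Set X} (hV : UBdd D V) (hUV : U ⊆ V) : UBdd D U :=
  fun x hx y hy => hV x (hUV hx) y (hUV hy)

theorem UBdd.mono {E : ℝ} {U : Set X} (hU : UBdd D U) (hDE : D ≤ E) : UBdd E U :=
  fun x hx y hy => (hU x hx y hy).trans hDE

theorem UBdd.thickening {U : Set X} (hU : UBdd D U) (R : ℝ) :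
    UBdd (D + 2 * R) (thickening R U) := by
  intro x hx y hy
  obtain ⟨x', hx', hxx'⟩ := mem_thickening_iff.1 hx
  obtain ⟨y', hy', hyy'⟩ := mem_thickening_iff.1 hy
  linarith [hU x' hx' y' hy', dist_triangle4 x x' y' y, dist_comm y y']

theorem uBdd_ball (x : X) (R : ℝ) : UBdd (2 * R) (ball x R) := by
  intro a ha b hb
  linarith [dist_triangle_right a b x, mem_ball.1 ha, mem_ball.1 hb]

theorem LebAtLeast.isCover (h : LebAtLeast R 𝒱) (hR : 0 < R) : IsCover 𝒱 := fun x =>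
  let ⟨U, hU, hxU⟩ := h x
  ⟨U, hU, hxU (mem_ball_self hR)⟩

theorem LargeScaleFinitistic.of_forall_exists
    (h : ∀ R > (0 : ℝ), ∃ (m : ℕ) (𝒱 : Set (Set X)) (D : ℝ),
      (∀ U ∈ 𝒱, UBdd D U) ∧ LebAtLeast R 𝒱 ∧ MultAtMost m 𝒱) :
    LargeScaleFinitistic X := by
  intro R hR
  obtain ⟨m, 𝒱, D, h_bdd, h_leb, h_mult⟩ := h R hR
  exact ⟨max m 1, le_max_right m 1, 𝒱, max D 1, lt_max_of_lt_right one_pos, h_leb.isCover hR,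
    fun U hU => (h_bdd U hU).mono (le_max_left D 1), h_leb, h_mult.mono (le_max_left m 1)⟩

theorem MultAtMost.iUnion_image_preimagePiece [Fintype ι] (h𝒲 : MultAtMost m 𝒲) (f : X → Y) (R : ℝ)
    (B : Set Y → ι → Set X) :
    MultAtMost (Fintype.card ι * m) (⋃ i, preimagePiece f R B i '' 𝒲) := by
  refine h𝒲.of_forall_exists_points (preimagePiece f R B) fun x => ⟨fun _ => f x, ?_⟩
  intro U hU hxU
  obtain ⟨i, A, hA, rfl⟩ := mem_iUnion.1 hU
  exact ⟨i, A, hA, hxU.1, rfl⟩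

variable [MetricSpace Y] {n : ℕ} {f : X → Y}

theorem Coarse.exists_mapsTo_ball (hf : Coarse f) (hR : 0 < R) :
    ∃ r > 0, ∀ x, MapsTo f (ball x R) (ball (f x) r) := by
  obtain ⟨S, hS, hfS⟩ := hf R hR
  exact ⟨S + 1, by positivity, fun x z hz => (hfS z x hz.le).trans_lt (lt_add_one S)⟩

theorem CoarselyNTo1.exists_net (hf : CoarselyNTo1 n f) (hR : 0 < R) :
    ∃ r > 0, ∀ A, UBdd R A → (f ⁻¹' A).Nonempty →
      ∃ p : Fin n → X, ∀ x ∈ f ⁻¹' A, ∃ i, dist x (p i) < r := by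
  obtain ⟨S, hS, hfS⟩ := hf R hR
  refine ⟨S + 1, by positivity, fun A hA ⟨x₀, _⟩ => ?_⟩
  obtain ⟨B, hAB, hBS⟩ := hfS A hA
  have h_point (i : Fin n) : ∃ p, (B i).Nonempty → p ∈ B i := by
    rcases (B i).eq_empty_or_nonempty with hB | ⟨p, hp⟩
    · exact ⟨x₀, fun h => absurd hB h.ne_empty⟩
    · exact ⟨p, fun _ => hp⟩
  choose p hp using h_point
  refine ⟨p, fun x hx => ?_⟩
  obtain ⟨i, hxi⟩ := mem_iUnion.1 (hAB hx)
  exact ⟨i, (hBS i x hxi (p i) (hp i ⟨x, hxi⟩)).trans_lt (lt_add_one S)⟩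

theorem UBdd.coreImage {E : ℝ} {U : Set X} (hU : UBdd D U) (hr : 0 < r)
    (hf : ∀ x x', dist x x' ≤ D → dist (f x) (f x') ≤ E) (R : ℝ) :
    UBdd (E + 2 * R) (coreImage f r R U) := by
  refine UBdd.thickening ?_ R
  rintro _ ⟨x, hx, rfl⟩ _ ⟨x', hx', rfl⟩
  exact hf x x' (hU x (hx (mem_ball_self hr)) x' (hx' (mem_ball_self hr)))

theorem LebAtLeast.image_coreImage {C : ℝ} (h𝒱 : LebAtLeast r 𝒱)
    (hf : ∀ y, ∃ x, dist y (f x) ≤ C) (R : ℝ) :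
    LebAtLeast R (coreImage f r (R + C) '' 𝒱) := by
  intro y
  obtain ⟨x, hxy⟩ := hf y
  obtain ⟨U, hU, hxU⟩ := h𝒱 x
  refine ⟨_, mem_image_of_mem _ hU, fun z hz => ?_⟩
  refine mem_thickening_iff.2 ⟨f x, mem_image_of_mem f hxU, ?_⟩
  calc dist z (f x) ≤ dist z y + dist y (f x) := dist_triangle z y (f x)
    _ < R + C := add_lt_add_of_lt_of_le hz hxy

theorem MultAtMost.image_coreImage [Fintype ι] (h𝒱 : MultAtMost m 𝒱)
    (hf : ∀ y, ∃ p : ι → X, ∀ x ∈ f ⁻¹' ball y R, ∃ i, dist x (p i) < r) :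
    MultAtMost (Fintype.card ι * m) (coreImage f r R '' 𝒱) := by
  refine h𝒱.of_forall_exists_points (fun _ => coreImage f r R) fun y => ?_
  obtain ⟨p, hp⟩ := hf y
  refine ⟨p, ?_⟩
  rintro _ ⟨U, hU, rfl⟩ hy
  obtain ⟨_, ⟨x, hxU, rfl⟩, hyx⟩ := mem_thickening_iff.1 hy
  obtain ⟨i, hxi⟩ := hp x (mem_ball'.2 hyx)
  exact ⟨i, U, hU, hxU (mem_ball'.2 hxi), rfl⟩

theorem LebAtLeast.iUnion_image_preimagePiece {B : Set Y → ι → Set X} (h𝒲 : LebAtLeast r 𝒲)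
    (hr : 0 < r) (hf : ∀ x, MapsTo f (ball x R) (ball (f x) r))
    (hB : ∀ A ∈ 𝒲, f ⁻¹' A ⊆ ⋃ i, B A i) :
    LebAtLeast R (⋃ i, preimagePiece f R B i '' 𝒲) := by
  intro x
  obtain ⟨A, hA, hxA⟩ := h𝒲 (f x)
  obtain ⟨i, hxi⟩ := mem_iUnion.1 (hB A hA (hxA (mem_ball_self hr)))
  exact ⟨_, mem_iUnion_of_mem i (mem_image_of_mem _ hA),
    subset_inter (fun z hz => hxA (hf x hz)) (ball_subset_thickening hxi R)⟩

theorem LargeScaleFinitistic.map (hX : LargeScaleFinitistic X) (hsurj : CoarselySurjective f)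
    (hcoarse : Coarse f) (hnto1 : CoarselyNTo1 n f) : LargeScaleFinitistic Y := by
  refine .of_forall_exists fun R hR => ?_
  obtain ⟨C, hC, hfC⟩ := hsurj
  obtain ⟨r, hr, h_net⟩ := hnto1.exists_net (R := 2 * (R + C)) (by positivity)
  obtain ⟨m, -, 𝒱, D, hD, -, h_bdd, h_leb, h_mult⟩ := hX r hr
  obtain ⟨E, -, hfE⟩ := hcoarse D hD
  have h_net_ball (y : Y) :
      ∃ p : Fin n → X, ∀ x ∈ f ⁻¹' ball y (R + C), ∃ i, dist x (p i) < r := by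
    obtain ⟨x, hxy⟩ := hfC y
    exact h_net (ball y (R + C)) (uBdd_ball y (R + C))
      ⟨x, mem_ball'.2 (hxy.trans_lt (lt_add_of_pos_left C hR))⟩
  exact ⟨_, coreImage f r (R + C) '' 𝒱, E + 2 * (R + C),
    forall_mem_image.2 fun U hU => (h_bdd U hU).coreImage hr hfE (R + C),
    h_leb.image_coreImage hfC R, h_mult.image_coreImage h_net_ball⟩

theorem LargeScaleFinitistic.comap (hY : LargeScaleFinitistic Y) (hcoarse : Coarse f)
    (hnto1 : CoarselyNTo1 n f) : LargeScaleFinitistic X := by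
  refine .of_forall_exists fun R hR => ?_
  obtain ⟨r, hr, hfr⟩ := hcoarse.exists_mapsTo_ball hR
  obtain ⟨m, -, 𝒲, D, hD, -, h_bdd, h_leb, h_mult⟩ := hY r hr
  obtain ⟨S, -, hfS⟩ := hnto1 D hD
  choose! B hB_cover hB_bdd using hfS
  have h_piece_bdd : ∀ U ∈ ⋃ i, preimagePiece f R B i '' 𝒲, UBdd (S + 2 * R) U := by
    intro U hU
    obtain ⟨i, A, hA, rfl⟩ := mem_iUnion.1 hU
    exact ((hB_bdd A (h_bdd A hA) i).thickening R).subset inter_subset_right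
  exact ⟨_, ⋃ i, preimagePiece f R B i '' 𝒲, S + 2 * R, h_piece_bdd,
    h_leb.iUnion_image_preimagePiece hr hfr fun A hA => hB_cover A (h_bdd A hA),
    h_mult.iUnion_image_preimagePiece f R B⟩

end

theorem stmt9_general {X Y : Type*} [MetricSpace X] [MetricSpace Y] {n : ℕ} {f : X → Y}
    (hsurj : CoarselySurjective f) (hcoarse : Coarse f) (hnto1 : CoarselyNTo1 n f) :
    LargeScaleFinitistic X ↔ LargeScaleFinitistic Y :=
  ⟨fun hX => hX.map hsurj hcoarse hnto1, fun hY => hY.comap hcoarse hnto1⟩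

/-- Being large scale finitistic is an invariant of surjective coarse, coarsely
`n`-to-`1` maps. -/
theorem stmt9 {X Y : Type*} [MetricSpace X] [MetricSpace Y] (n : ℕ) (hn : 1 ≤ n)
    (f : X → Y) (hsurj : Function.Surjective f) (hcoarse : Coarse f)
    (hnto1 : CoarselyNTo1 n f) :
    (∀ R > (0:ℝ), ∃ m : ℕ, 1 ≤ m ∧ ∃ 𝒱 : Set (Set X), ∃ D > (0:ℝ), IsCover 𝒱 ∧
      (∀ U ∈ 𝒱, UBdd D U) ∧ LebAtLeast R 𝒱 ∧ MultAtMost m 𝒱) ↔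
    (∀ R > (0:ℝ), ∃ m : ℕ, 1 ≤ m ∧ ∃ 𝒲 : Set (Set Y), ∃ D > (0:ℝ), IsCover 𝒲 ∧
      (∀ W ∈ 𝒲, UBdd D W) ∧ LebAtLeast R 𝒲 ∧ MultAtMost m 𝒲) :=
  stmt9_general (.of_surjective hsurj) hcoarse hnto1
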